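/- Let φ be an even Schwartz function whose Fourier transform φ̂ is compactly supported. Then there is a constant C = C(φ) such that for every integer N ≥ 3, | (2/log N) · Σ_{p prime} (log p / p) · φ̂(2 log p / log N) − φ(0)/2 | ≤ C / log N. -/

import Mathlib

open MeasureTheory Real Complex

/-- The Fourier transform `φ̂(ξ) = ∫_ℝ φ(x) e^{-2πixξ} dx` of a real-valued function. -/
noncomputable def fourierHat (φ : ℝ → ℝ) (ξ : ℝ) : ℂ :=
  ∫ x : ℝ, (φ x : ℂ) * Complex.exp (-2 * π * Complex.I * x * ξ)

/-!
Mertens' first theorem, read off from the prime factorization of `n !`, says that the weights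
`log p / p` placed at the points `s * log p` have cumulative mass `A u = u / s + O(1)` on `[0, u]`,
uniformly in `s`. Hence, for a Schwartz function `g`, summation and then integration by parts give
`∑ (log p / p) g(s log p) = -∫ A g' = (1 / s) ∫_0^∞ g + O(∫_0^∞ |g'|)`.
Take `g = φ̂` and `s = 2 / log N`; as `φ̂` is even, Fourier inversion at the origin evaluates
`∫_0^∞ φ̂ = φ 0 / 2`.
-/

open Set Filter Topology
open scoped SchwartzMap FourierTransform

section Mertens

open scoped Nat

/-- Mertens' sum `∑_{p ≤ x} log p / p` over the primes up to the real number `x`. -/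
noncomputable def mertensSum (x : ℝ) : ℝ :=
  ∑ p ∈ Nat.primesLE ⌊x⌋₊, Real.log p / p

theorem log_factorial_eq_sum_primesLE (n : ℕ) :
    Real.log n ! = ∑ p ∈ Nat.primesLE n, (n !).factorization p * Real.log p := by
  rw [Real.log_nat_eq_sum_factorization]
  refine Finsupp.sum_of_support_subset _ (fun p hp => ?_) _ (by simp)
  have hp' := Nat.prime_of_mem_primeFactors hp
  exact Nat.mem_primesLE.2 ⟨hp'.dvd_factorial.1 (Nat.dvd_of_mem_primeFactors hp), hp'⟩

theorem div_sub_one_le_factorization_factorial {p : ℕ} (hp : p.Prime) (n : ℕ) :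
    (n : ℝ) / p - 1 ≤ (n !).factorization p := by
  have hfloor : n / p ≤ (n !).factorization p := by
    rw [Nat.factorization_factorial hp (b := Nat.log p n + 2) (by lia)]
    simpa using Finset.single_le_sum (f := fun i => n / p ^ i) (fun _ _ => Nat.zero_le _)
      (show 1 ∈ Finset.Ico 1 (Nat.log p n + 2) by simp)
  calc (n : ℝ) / p - 1 ≤ (⌊(n : ℝ) / p⌋₊ : ℝ) := (Nat.sub_one_lt_floor _).le
    _ = (n / p : ℕ) := by rw [Nat.floor_div_natCast, Nat.floor_natCast]
    _ ≤ (n !).factorization p := by exact_mod_cast hfloor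

theorem factorization_factorial_le_div_sub_one {p : ℕ} (hp : p.Prime) (n : ℕ) :
    ((n !).factorization p : ℝ) ≤ n / (p - 1) := by
  have hp1 : (1 : ℝ) < p := by exact_mod_cast hp.one_lt
  have hlegendre : (p - 1) * (n !).factorization p ≤ n :=
    Nat.sub_one_mul_factorization_factorial hp ▸ Nat.sub_le _ _
  rw [le_div_iff₀' (by linarith), ← Nat.cast_pred hp.pos]
  exact_mod_cast hlegendre

theorem mertensSum_natCast_le {n : ℕ} (hn : n ≠ 0) :
    mertensSum n ≤ Real.log n + Real.log 4 := by
  have hn0 : (0 : ℝ) < n := by positivity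
  have hfact : Real.log n ! ≤ n * Real.log n := by
    rw [← Real.log_pow]
    exact Real.log_le_log (by positivity) (by exact_mod_cast Nat.factorial_le_pow n)
  refine le_of_mul_le_mul_left ?_ hn0
  calc n * mertensSum n
      = ∑ p ∈ Nat.primesLE n, ((n / p - 1) * Real.log p) + Chebyshev.theta n := by
        rw [Chebyshev.theta_eq_sum_primesLE_log, mertensSum, Nat.floor_natCast, Finset.mul_sum,
          ← Finset.sum_add_distrib]
        exact Finset.sum_congr rfl fun p _ => by ring
    _ ≤ ∑ p ∈ Nat.primesLE n, (n !).factorization p * Real.log p + Real.log 4 * n := by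
        gcongr with p hp
        · exact div_sub_one_le_factorization_factorial (Nat.prime_of_mem_primesLE hp) n
        · exact Chebyshev.theta_le_log4_mul_x hn0.le
    _ ≤ n * (Real.log n + Real.log 4) := by
        rw [← log_factorial_eq_sum_primesLE]
        linarith

theorem log_div_mul_sub_one_le {x : ℝ} (hx : 2 ≤ x) :
    Real.log x / (x * (x - 1)) ≤ 4 * (1 / x ^ (3 / 2 : ℝ)) := by
  have hx0 : 0 < x := by linarith
  have hlog : Real.log x ≤ 2 * x ^ (1 / 2 : ℝ) := by
    linarith [Real.log_le_rpow_div hx0.le (ε := 1 / 2) (by norm_num)]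
  have hpow : x ^ (1 / 2 : ℝ) * x ^ (3 / 2 : ℝ) = x ^ 2 := by
    rw [← Real.rpow_add hx0, ← Real.rpow_natCast]
    norm_num
  rw [mul_one_div, div_le_div_iff₀ (by nlinarith) (by positivity)]
  calc Real.log x * x ^ (3 / 2 : ℝ) ≤ 2 * x ^ (1 / 2 : ℝ) * x ^ (3 / 2 : ℝ) := by gcongr
    _ = 2 * x ^ 2 := by rw [mul_assoc, hpow]
    _ ≤ 4 * (x * (x - 1)) := by nlinarith

theorem exists_sum_primesLE_log_div_mul_sub_one_le :
    ∃ C : ℝ, ∀ n : ℕ, ∑ p ∈ Nat.primesLE n, Real.log p / (p * (p - 1)) ≤ C := by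
  have hsummable : Summable fun k : ℕ => 4 * (1 / (k : ℝ) ^ (3 / 2 : ℝ)) :=
    (Real.summable_one_div_nat_rpow.2 (by norm_num)).mul_left 4
  refine ⟨∑' k : ℕ, 4 * (1 / (k : ℝ) ^ (3 / 2 : ℝ)), fun n => ?_⟩
  calc ∑ p ∈ Nat.primesLE n, Real.log p / (p * (p - 1))
      ≤ ∑ p ∈ Nat.primesLE n, 4 * (1 / (p : ℝ) ^ (3 / 2 : ℝ)) := Finset.sum_le_sum fun p hp =>
        log_div_mul_sub_one_le (by exact_mod_cast Nat.two_le_of_mem_primesLE hp)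
    _ ≤ ∑' k : ℕ, 4 * (1 / (k : ℝ) ^ (3 / 2 : ℝ)) :=
        hsummable.sum_le_tsum _ fun _ _ => by positivity

theorem exists_log_sub_le_mertensSum_natCast :
    ∃ C : ℝ, ∀ n : ℕ, n ≠ 0 → Real.log n - C ≤ mertensSum n := by
  obtain ⟨C, hC⟩ := exists_sum_primesLE_log_div_mul_sub_one_le
  refine ⟨C + 1, fun n hn => ?_⟩
  have hn0 : (0 : ℝ) < n := by positivity
  have hstirling : n * (Real.log n - 1) ≤ Real.log n ! := by
    have := Stirling.le_log_factorial_stirling hn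
    have := Real.log_natCast_nonneg n
    have := Real.log_nonneg (show 1 ≤ 2 * π by linarith [Real.two_le_pi])
    linarith
  have hfact : Real.log n ! ≤ n * (mertensSum n + C) :=
    calc Real.log n !
        ≤ ∑ p ∈ Nat.primesLE n, n / (p - 1) * Real.log p := by
          rw [log_factorial_eq_sum_primesLE]
          gcongr with p hp
          exact factorization_factorial_le_div_sub_one (Nat.prime_of_mem_primesLE hp) n
      _ = n * (mertensSum n + ∑ p ∈ Nat.primesLE n, Real.log p / (p * (p - 1))) := by
          rw [mertensSum, Nat.floor_natCast, ← Finset.sum_add_distrib, Finset.mul_sum]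
          refine Finset.sum_congr rfl fun p hp => ?_
          have hp2 : (2 : ℝ) ≤ p := by exact_mod_cast Nat.two_le_of_mem_primesLE hp
          have hp1 : (p : ℝ) - 1 ≠ 0 := by linarith
          field_simp
          ring
      _ ≤ n * (mertensSum n + C) := by gcongr; exact hC n
  linarith [le_of_mul_le_mul_left (hstirling.trans hfact) hn0]

theorem exists_abs_mertensSum_sub_log_le :
    ∃ C : ℝ, ∀ x : ℝ, 1 ≤ x → |mertensSum x - Real.log x| ≤ C := by
  obtain ⟨C, hC⟩ := exists_log_sub_le_mertensSum_natCast
  refine ⟨max (Real.log 4) (C + Real.log 2), fun x hx => ?_⟩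
  have hn : ⌊x⌋₊ ≠ 0 := (Nat.floor_pos.2 hx).ne'
  have hn1 : (1 : ℝ) ≤ ⌊x⌋₊ := by exact_mod_cast Nat.one_le_iff_ne_zero.2 hn
  have hfloor_le : Real.log ⌊x⌋₊ ≤ Real.log x :=
    Real.log_le_log (by linarith) (Nat.floor_le (by linarith))
  have hle_floor : Real.log x ≤ Real.log ⌊x⌋₊ + Real.log 2 := by
    rw [← Real.log_mul (by linarith) two_ne_zero]
    exact Real.log_le_log (by linarith) (by linarith [Nat.lt_floor_add_one x])
  have hsum : mertensSum x = mertensSum ⌊x⌋₊ := by simp only [mertensSum, Nat.floor_natCast]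
  rw [hsum, abs_le]
  constructor
  · linarith [hC _ hn, le_max_right (Real.log 4) (C + Real.log 2)]
  · linarith [mertensSum_natCast_le hn, le_max_left (Real.log 4) (C + Real.log 2)]

end Mertens

section AbelSummation

variable {ι E : Type*} [NormedAddCommGroup E] [NormedSpace ℝ E]
  {a x : ι → ℝ} {A : ℝ → ℝ} {g g' : ℝ → E}

theorem integrableOn_smul_of_abs_sub_mul_le {κ C : ℝ} (hA : MonotoneOn A (Ioi 0))
    (hAκ : ∀ u, 0 < u → |A u - κ * u| ≤ C) (hg' : IntegrableOn g' (Ioi 0))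
    (hug' : IntegrableOn (fun u => u • g' u) (Ioi 0)) :
    IntegrableOn (fun u => A u • g' u) (Ioi 0) := by
  have hmeas : AEStronglyMeasurable A (volume.restrict (Ioi 0)) :=
    (aemeasurable_restrict_of_monotoneOn measurableSet_Ioi hA).aestronglyMeasurable
  have herror : IntegrableOn (fun u => (A u - κ * u) • g' u) (Ioi 0) :=
    hg'.bdd_smul C (hmeas.sub (by fun_prop)) (ae_restrict_of_forall_mem measurableSet_Ioi hAκ)
  exact (herror.add (hug'.smul κ)).congr (.of_forall fun u => by
    simp only [Pi.add_apply, Pi.smul_apply]; module)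

variable [CompleteSpace E]

theorem setIntegral_indicator_smul_deriv {i : ι} (hx : 0 ≤ x i)
    (hg : ∀ u, 0 ≤ u → HasDerivAt g (g' u) u) (hlim : Tendsto g atTop (𝓝 0))
    (hg' : IntegrableOn g' (Ioi 0)) :
    ∫ u in Ioi 0, {j | x j ≤ u}.indicator a i • g' u = -(a i • g (x i)) := by
  have hind (u : ℝ) :
      {j | x j ≤ u}.indicator a i • g' u = (Ici (x i)).indicator (fun v => a i • g' v) u := by
    by_cases h : x i ≤ u <;> simp [h]
  have hsubset : Ioi (x i) ⊆ Ioi 0 := Ioi_subset_Ioi hx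
  calc ∫ u in Ioi 0, {j | x j ≤ u}.indicator a i • g' u
      = ∫ u in Ioi 0 ∩ Ici (x i), a i • g' u := by
        simp only [hind, setIntegral_indicator measurableSet_Ici]
    _ = ∫ u in Ioi 0 ∩ Ioi (x i), a i • g' u :=
        setIntegral_congr_set (EventuallyEq.rfl.inter Ioi_ae_eq_Ici.symm)
    _ = a i • ∫ u in Ioi (x i), g' u := by rw [inter_eq_right.2 hsubset, integral_smul]
    _ = -(a i • g (x i)) := by
        rw [integral_Ioi_of_hasDerivAt_of_tendsto' (fun u hu => hg u (hx.trans hu))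
          (hg'.mono_set hsubset) hlim, zero_sub, smul_neg]

theorem hasSum_smul_comp_of_hasDerivAt [Countable ι] (ha : ∀ i, 0 ≤ a i) (hx : ∀ i, 0 ≤ x i)
    (hA : ∀ u, 0 < u → HasSum ({i | x i ≤ u}.indicator a) (A u))
    (hg : ∀ u, 0 ≤ u → HasDerivAt g (g' u) u) (hlim : Tendsto g atTop (𝓝 0))
    (hg' : IntegrableOn g' (Ioi 0)) (hAg' : IntegrableOn (fun u => A u • g' u) (Ioi 0)) :
    HasSum (fun i => a i • g (x i)) (-∫ u in Ioi 0, A u • g' u) := by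
  have hind_nonneg (u : ℝ) (i : ι) : 0 ≤ {j | x j ≤ u}.indicator a i :=
    indicator_nonneg (fun i _ => ha i) i
  have hbound : ∀ u ∈ Ioi (0 : ℝ),
      HasSum (fun i => {j | x j ≤ u}.indicator a i * ‖g' u‖) ‖A u • g' u‖ := fun u hu => by
    rw [norm_smul, Real.norm_of_nonneg ((hA u hu).nonneg (hind_nonneg u))]
    exact (hA u hu).mul_right _
  have hsum := hasSum_integral_of_dominated_convergence (μ := volume.restrict (Ioi 0))
    (F := fun i u => {j | x j ≤ u}.indicator a i • g' u) (f := fun u => A u • g' u)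
    (fun i u => {j | x j ≤ u}.indicator a i * ‖g' u‖)
    (fun i => ?_)
    (fun i => .of_forall fun u => by rw [norm_smul, Real.norm_of_nonneg (hind_nonneg u i)])
    (ae_restrict_of_forall_mem measurableSet_Ioi fun u hu => (hbound u hu).summable)
    (hAg'.norm.congr <| ae_restrict_of_forall_mem measurableSet_Ioi fun u hu =>
      (hbound u hu).tsum_eq.symm)
    (ae_restrict_of_forall_mem measurableSet_Ioi fun u hu => (hA u hu).smul_const _)
  · simpa only [setIntegral_indicator_smul_deriv (hx _) hg hlim hg', neg_neg] using hsum.neg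
  · have hmeas : Measurable fun u => {j | x j ≤ u}.indicator a i := by
      simpa only [indicator, mem_ofPred_eq] using
        Measurable.ite measurableSet_Ici measurable_const measurable_const
    exact hmeas.aestronglyMeasurable.smul hg'.aestronglyMeasurable

theorem integral_Ioi_eq_neg_integral_smul_deriv (hg : ∀ u, 0 ≤ u → HasDerivAt g (g' u) u)
    (hlim : Tendsto (fun u => u • g u) atTop (𝓝 0)) (hint : IntegrableOn g (Ioi 0))
    (hug' : IntegrableOn (fun u => u • g' u) (Ioi 0)) :
    ∫ u in Ioi 0, g u = -∫ u in Ioi 0, u • g' u := by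
  have hparts := integral_Ioi_of_hasDerivAt_of_tendsto' (a := 0)
    (fun u hu => (hasDerivAt_id' u).smul (hg u hu)) (hug'.add (by simpa only [one_smul])) hlim
  rw [integral_add hug' (by simpa only [one_smul])] at hparts
  simpa [eq_neg_iff_add_eq_zero, add_comm] using hparts

theorem summable_and_norm_tsum_smul_comp_sub_le [Countable ι] {κ C : ℝ}
    (ha : ∀ i, 0 ≤ a i) (hx : ∀ i, 0 ≤ x i)
    (hA : ∀ u, 0 < u → HasSum ({i | x i ≤ u}.indicator a) (A u))
    (hAκ : ∀ u, 0 < u → |A u - κ * u| ≤ C) (hg : ∀ u, 0 ≤ u → HasDerivAt g (g' u) u)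
    (hlim : Tendsto (fun u => u • g u) atTop (𝓝 0)) (hint : IntegrableOn g (Ioi 0))
    (hg' : IntegrableOn g' (Ioi 0)) (hug' : IntegrableOn (fun u => u • g' u) (Ioi 0)) :
    Summable (fun i => a i • g (x i)) ∧
      ‖∑' i, a i • g (x i) - κ • ∫ u in Ioi 0, g u‖ ≤ C * ∫ u in Ioi 0, ‖g' u‖ := by
  have hmono : MonotoneOn A (Ioi 0) := fun u hu v hv huv => hasSum_le
    (indicator_le_indicator_of_subset (fun i hi => le_trans hi huv) ha) (hA u hu) (hA v hv)
  have hAg' := integrableOn_smul_of_abs_sub_mul_le hmono hAκ hg' hug'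
  have hg_lim : Tendsto g atTop (𝓝 0) :=
    tendsto_zero_of_hasDerivAt_of_integrableOn_Ioi (fun u hu => hg u (le_of_lt hu)) hg' hint
  have hsum := hasSum_smul_comp_of_hasDerivAt ha hx hA hg hg_lim hg' hAg'
  have herror : ∑' i, a i • g (x i) - κ • ∫ u in Ioi 0, g u =
      -∫ u in Ioi 0, (A u - κ * u) • g' u := by
    have hκug' : IntegrableOn (fun u => κ • u • g' u) (Ioi 0) := hug'.smul κ
    simp only [sub_smul, mul_smul]
    rw [integral_sub hAg' hκug', integral_smul, hsum.tsum_eq,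
      integral_Ioi_eq_neg_integral_smul_deriv hg hlim hint hug']
    module
  refine ⟨hsum.summable, ?_⟩
  rw [herror, norm_neg, ← integral_const_mul]
  refine norm_integral_le_of_norm_le (hg'.norm.const_mul C) <|
    ae_restrict_of_forall_mem measurableSet_Ioi fun u hu => ?_
  rw [norm_smul]
  gcongr
  exact hAκ u hu

end AbelSummation

section Primes

theorem hasSum_indicator_log_div_mertensSum {s : ℝ} (hs : 0 < s) (u : ℝ) :
    HasSum ({p : Nat.Primes | s * Real.log p ≤ u}.indicator fun p => Real.log p / p)
      (mertensSum (Real.exp (u / s))) := by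
  let P : Finset Nat.Primes := (Nat.primesLE ⌊Real.exp (u / s)⌋₊).subtype Nat.Prime
  have hmem (p : Nat.Primes) : p ∈ P ↔ s * Real.log p ≤ u := calc
    p ∈ P ↔ (p : ℕ) ∈ Nat.primesLE ⌊Real.exp (u / s)⌋₊ := Finset.mem_subtype
    _ ↔ s * Real.log p ≤ u := by
      rw [Nat.mem_primesLE, and_iff_left p.prop, Nat.le_floor_iff (Real.exp_nonneg _),
        ← Real.log_le_iff_le_exp (by exact_mod_cast p.prop.pos), le_div_iff₀' hs]
  have hP : {p : Nat.Primes | s * Real.log p ≤ u} = P := Set.ext fun p => (hmem p).symm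
  rw [hP, mertensSum, ← Finset.sum_subtype_of_mem _ fun p => Nat.prime_of_mem_primesLE]
  exact hasSum_subtype_iff_indicator.1 (P.hasSum fun p => Real.log p / p)

variable {E : Type*} [NormedAddCommGroup E] [NormedSpace ℝ E] [CompleteSpace E]

theorem exists_summable_and_norm_tsum_primes_smul_comp_log_sub_le (g : 𝓢(ℝ, E)) :
    ∃ C : ℝ, ∀ s : ℝ, 0 < s →
      Summable (fun p : Nat.Primes => (Real.log p / p) • g (s * Real.log p)) ∧
      ‖∑' p : Nat.Primes, (Real.log p / p) • g (s * Real.log p) -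
        s⁻¹ • ∫ u in Ioi 0, g u‖ ≤ C := by
  obtain ⟨C, hC⟩ := exists_abs_mertensSum_sub_log_le
  let g' : 𝓢(ℝ, E) := SchwartzMap.derivCLM ℝ E g
  let idMul : 𝓢(ℝ, E) →L[ℝ] 𝓢(ℝ, E) := SchwartzMap.smulLeftCLM E fun u : ℝ => u
  have hidMul (f : 𝓢(ℝ, E)) : ⇑(idMul f) = fun u => u • f u :=
    SchwartzMap.smulLeftCLM_apply (by fun_prop) f
  refine ⟨C * ∫ u in Ioi 0, ‖g' u‖, fun s hs => ?_⟩
  refine summable_and_norm_tsum_smul_comp_sub_le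
    (A := fun u => mertensSum (Real.exp (u / s))) (fun p => ?_) (fun p => ?_)
    (fun u _ => hasSum_indicator_log_div_mertensSum hs u) (fun u hu => ?_)
    (fun u _ => g.differentiableAt.hasDerivAt) ?_ g.integrable.integrableOn
    g'.integrable.integrableOn ?_
  · have := Real.log_natCast_nonneg p
    positivity
  · have := Real.log_natCast_nonneg p
    positivity
  · simpa only [Real.log_exp, inv_mul_eq_div] using hC _ (Real.one_le_exp (by positivity))
  · exact hidMul g ▸ (idMul g).tendsto_cocompact.mono_left atTop_le_cocompact
  · exact hidMul g' ▸ (idMul g').integrable.integrableOn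

end Primes

section Fourier

theorem fourierHat_neg {φ : ℝ → ℝ} (heven : ∀ x, φ (-x) = φ x) (ξ : ℝ) :
    fourierHat φ (-ξ) = fourierHat φ ξ := by
  rw [fourierHat, fourierHat, ← integral_neg_eq_self]
  simp only [heven, Complex.ofReal_neg, mul_neg, neg_mul, neg_neg]

theorem fourierHat_eq_fourier (φ : 𝓢(ℝ, ℝ)) :
    fourierHat φ = 𝓕 (SchwartzMap.postcompCLM (𝕜 := ℝ) Complex.ofRealCLM φ) := by
  ext ξ
  rw [SchwartzMap.fourier_coe, Real.fourier_real_eq_integral_exp_smul, fourierHat]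
  congr with x
  rw [SchwartzMap.postcompCLM_apply, Complex.ofRealCLM_apply, smul_eq_mul, mul_comm]
  push_cast
  ring_nf

theorem integral_fourier_eq_apply_zero {V E : Type*} [NormedAddCommGroup V]
    [InnerProductSpace ℝ V] [FiniteDimensional ℝ V] [MeasurableSpace V] [BorelSpace V]
    [NormedAddCommGroup E] [NormedSpace ℂ E] [CompleteSpace E] (f : 𝓢(V, E)) :
    ∫ v, 𝓕 f v = f 0 := by
  have hinv : 𝓕⁻ (𝓕 f) 0 = f 0 := by rw [FourierTransform.fourierInv_fourier_eq]
  rw [SchwartzMap.fourierInv_coe, Real.fourierInv_eq] at hinv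
  simpa using hinv

theorem integral_eq_two_smul_integral_Ioi_of_even {E : Type*} [NormedAddCommGroup E]
    [NormedSpace ℝ E] {f : ℝ → E} (hf : Integrable f) (heven : ∀ x, f (-x) = f x) :
    ∫ x, f x = (2 : ℝ) • ∫ x in Ioi 0, f x := by
  have hIic : ∫ x in Iic 0, f x = ∫ x in Ioi 0, f x := by
    simpa only [heven, neg_zero] using integral_comp_neg_Iic 0 f
  rw [← intervalIntegral.integral_Iic_add_Ioi hf.integrableOn hf.integrableOn, hIic, two_smul]

theorem integral_Ioi_fourierHat {φ : 𝓢(ℝ, ℝ)} (heven : ∀ x, φ (-x) = φ x) :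
    ∫ ξ in Ioi 0, fourierHat φ ξ = φ 0 / 2 := by
  have htotal : ∫ ξ, fourierHat φ ξ = φ 0 := by
    simp only [fourierHat_eq_fourier, integral_fourier_eq_apply_zero, SchwartzMap.postcompCLM_apply,
      Complex.ofRealCLM_apply]
  have hint : Integrable (fourierHat φ) := by
    rw [fourierHat_eq_fourier]
    exact SchwartzMap.integrable _
  rw [← htotal, integral_eq_two_smul_integral_Ioi_of_even hint (fourierHat_neg heven)]
  simp

end Fourier

theorem prime_sum_asymptotic_general (φ : 𝓢(ℝ, ℝ)) (heven : ∀ x, φ (-x) = φ x) :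
    ∃ C : ℝ, ∀ T : ℝ, 1 < T →
      Summable (fun p : Nat.Primes =>
        ((Real.log p / p : ℝ) : ℂ) * fourierHat φ (2 * Real.log p / Real.log T)) ∧
      ‖2 / (Real.log T : ℂ) * ∑' p : Nat.Primes,
          ((Real.log p / p : ℝ) : ℂ) * fourierHat φ (2 * Real.log p / Real.log T) - φ 0 / 2‖ ≤
        C / Real.log T := by
  obtain ⟨C, hC⟩ := exists_summable_and_norm_tsum_primes_smul_comp_log_sub_le
    (𝓕 (SchwartzMap.postcompCLM (𝕜 := ℝ) Complex.ofRealCLM φ))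
  rw [← fourierHat_eq_fourier, integral_Ioi_fourierHat heven] at hC
  refine ⟨2 * C, fun T hT => ?_⟩
  have hlog : 0 < Real.log T := Real.log_pos hT
  obtain ⟨hsum, hle⟩ := hC (2 / Real.log T) (by positivity)
  simp only [div_mul_eq_mul_div, Complex.real_smul, inv_div] at hsum hle
  refine ⟨hsum, ?_⟩
  have hlog' : (Real.log T : ℂ) ≠ 0 := Complex.ofReal_ne_zero.2 hlog.ne'
  set S := ∑' p : Nat.Primes,
    ((Real.log p / p : ℝ) : ℂ) * fourierHat φ (2 * Real.log p / Real.log T)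
  calc ‖2 / (Real.log T : ℂ) * S - φ 0 / 2‖
      = ‖((2 / Real.log T : ℝ) : ℂ) * (S - ((Real.log T / 2 : ℝ) : ℂ) * (φ 0 / 2))‖ := by
        congr 1
        push_cast
        field_simp
    _ = 2 / Real.log T * ‖S - ((Real.log T / 2 : ℝ) : ℂ) * (φ 0 / 2)‖ := by
        rw [norm_mul, Complex.norm_of_nonneg (by positivity)]
    _ ≤ 2 / Real.log T * C := by gcongr
    _ = 2 * C / Real.log T := by ring

/-- Prime number theorem consequence: for an even Schwartz function `φ` with compactly
supported Fourier transform, `(2/log N) Σ_p (log p / p) φ̂(2 log p / log N) = φ(0)/2 + O(1/log N)`. -/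
theorem prime_sum_asymptotic (φ : SchwartzMap ℝ ℝ) (heven : ∀ x : ℝ, φ (-x) = φ x)
    (hsupp : HasCompactSupport (fourierHat (fun x => φ x))) :
    ∃ C : ℝ, ∀ N : ℕ, 3 ≤ N →
      ‖(2 / (Real.log N : ℂ)) * (∑' p : Nat.Primes,
            ((Real.log p / (p : ℝ) : ℝ) : ℂ) *
              fourierHat (fun x => φ x) (2 * Real.log p / Real.log N)) - (φ 0 : ℂ) / 2‖
        ≤ C / Real.log N := by
  obtain ⟨C, hC⟩ := prime_sum_asymptotic_general φ heven
  exact ⟨C, fun N hN => (hC N (by exact_mod_cast (by lia : 1 < N))).2⟩
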